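/- arXiv:2311.13883 — 2 statements merged into one kernel-verified Lean document; each statement's English description precedes it below -/
import Mathlib

section
/- Let μ, ν ∈ P_2(ℝ^d) be supported on the same line, i.e. there exist a ∈ ℝ^d and a unit vector u ∈ S^{d−1} such that both μ and ν are supported in {a + tu : t ∈ ℝ}. Then SW_2²(μ, ν) = W_2²(μ, ν)/d. -/
open MeasureTheory ENNReal Metric Filter
open scoped RealInnerProductSpace NNReal

noncomputable section

/-- `ℝ^d` as a Euclidean space. -/
abbrev Ed (d : ℕ) : Type := EuclideanSpace ℝ (Fin d)

/-- `π` is a coupling of `μ` and `ν`. -/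
def IsCoupling {E : Type*} [MeasurableSpace E] (π : Measure (E × E)) (μ ν : Measure E) : Prop :=
  π.map Prod.fst = μ ∧ π.map Prod.snd = ν

/-- Squared 2-Wasserstein distance. -/
def W2sq {E : Type*} [MeasurableSpace E] [NormedAddCommGroup E] (μ ν : Measure E) : ℝ≥0∞ :=
  ⨅ (π : Measure (E × E)) (_ : IsCoupling π μ ν), ∫⁻ p, (‖p.1 - p.2‖₊ : ℝ≥0∞) ^ 2 ∂π

/-- The uniform probability measure on the unit sphere `S^{d-1}`. -/
def unifSphere (d : ℕ) : Measure (sphere (0 : Ed d) 1) :=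
  ((volume : Measure (Ed d)).toSphere Set.univ)⁻¹ • (volume : Measure (Ed d)).toSphere

/-- Projection `P^θ(x) = ⟨x, θ⟩`. -/
def proj {d : ℕ} (θ : Ed d) (x : Ed d) : ℝ := ⟪x, θ⟫

/-- Squared Sliced-Wasserstein distance. -/
def SW2sq {d : ℕ} (μ ν : Measure (Ed d)) : ℝ≥0∞ :=
  ∫⁻ θ : sphere (0 : Ed d) 1,
    W2sq (μ.map (proj (θ : Ed d))) (ν.map (proj (θ : Ed d))) ∂(unifSphere d)

/-- Sliced-Wasserstein distance. -/
def SW2 {d : ℕ} (μ ν : Measure (Ed d)) : ℝ := Real.sqrt (SW2sq μ ν).toReal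

/-- Finite second moment. -/
def FiniteSecondMoment {d : ℕ} (μ : Measure (Ed d)) : Prop :=
  ∫⁻ x, (‖x‖₊ : ℝ≥0∞) ^ 2 ∂μ < ∞

/-- `μ ∈ P_2(K)`: probability measure supported in `K` with finite second moment. -/
def MemP2 {d : ℕ} (K : Set (Ed d)) (μ : Measure (Ed d)) : Prop :=
  IsProbabilityMeasure μ ∧ μ Kᶜ = 0 ∧ FiniteSecondMoment μ

/-!
A measure carried by the line `a + ℝu` is the image of a measure on `ℝ` under `t ↦ a + t • u`, and
`P^θ` turns this parametrization into `t ↦ ⟪a, θ⟫ + t * ⟪u, θ⟫`. Affine maps `t ↦ c + t • v` of `ℝ`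
into a normed space multiply `W₂²` by `‖v‖²`, so `SW₂² = W₂² * ∫ ⟪u, θ⟫² dλ(θ)`. By rotation
invariance the integral depends only on `‖u‖`; summing it over an orthonormal basis gives `1 / d`.
-/

section Wasserstein

variable {E F : Type*} [MeasurableSpace E] [MeasurableSpace F]

lemma IsCoupling.map {π : Measure (E × E)} {μ ν : Measure E} (hπ : IsCoupling π μ ν) {f : E → F}
    (hf : Measurable f) : IsCoupling (π.map (Prod.map f f)) (μ.map f) (ν.map f) := by
  obtain ⟨rfl, rfl⟩ := hπ
  constructor
  · rw [Measure.map_map measurable_fst (hf.prodMap hf), Measure.map_map hf measurable_fst,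
      Prod.map_fst']
  · rw [Measure.map_map measurable_snd (hf.prodMap hf), Measure.map_map hf measurable_snd,
      Prod.map_snd']

lemma isCoupling_map_diag (μ : Measure E) : IsCoupling (μ.map fun x ↦ (x, x)) μ μ := by
  constructor
  · rw [Measure.map_map measurable_fst (by fun_prop)]
    exact Measure.map_id
  · rw [Measure.map_map measurable_snd (by fun_prop)]
    exact Measure.map_id

variable [NormedAddCommGroup E] [NormedAddCommGroup F]

lemma IsCoupling.W2sq_le {π : Measure (E × E)} {μ ν : Measure E} (hπ : IsCoupling π μ ν) :
    W2sq μ ν ≤ ∫⁻ p, ‖p.1 - p.2‖ₑ ^ 2 ∂π :=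
  iInf₂_le π hπ

lemma W2sq_self (μ : Measure E) : W2sq μ μ = 0 := by
  refine le_antisymm ?_ zero_le
  calc W2sq μ μ ≤ ∫⁻ p, ‖p.1 - p.2‖ₑ ^ 2 ∂μ.map fun x ↦ (x, x) := (isCoupling_map_diag μ).W2sq_le
    _ ≤ ∫⁻ x, ‖x - x‖ₑ ^ 2 ∂μ := lintegral_map_le _ _
    _ = 0 := by simp

variable [BorelSpace E] [BorelSpace F] {f : E → F} {g : F → E} {K : ℝ≥0}

lemma W2sq_map_le_of_lipschitzWith (hf : LipschitzWith K f) (hK : K ≠ 0) (μ ν : Measure E) :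
    W2sq (μ.map f) (ν.map f) ≤ (K : ℝ≥0∞) ^ 2 * W2sq μ ν := by
  have hK_zero : (K : ℝ≥0∞) ^ 2 ≠ 0 := by simpa using hK
  have hK_top : (K : ℝ≥0∞) ^ 2 ≠ ∞ := by finiteness
  rw [W2sq.eq_def μ ν, mul_iInf_of_ne hK_zero hK_top]
  refine le_iInf fun π ↦ ?_
  rw [mul_iInf_of_ne hK_zero hK_top]
  refine le_iInf fun hπ ↦ ?_
  calc W2sq (μ.map f) (ν.map f)
      ≤ ∫⁻ p, ‖p.1 - p.2‖ₑ ^ 2 ∂π.map (Prod.map f f) := (hπ.map hf.continuous.measurable).W2sq_le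
    _ ≤ ∫⁻ p, ‖f p.1 - f p.2‖ₑ ^ 2 ∂π := lintegral_map_le _ _
    _ ≤ ∫⁻ p, (K : ℝ≥0∞) ^ 2 * ‖p.1 - p.2‖ₑ ^ 2 ∂π := by
        refine lintegral_mono fun p ↦ ?_
        simp only [← mul_pow, ← edist_eq_enorm_sub]
        gcongr
        exact hf p.1 p.2
    _ = (K : ℝ≥0∞) ^ 2 * ∫⁻ p, ‖p.1 - p.2‖ₑ ^ 2 ∂π := lintegral_const_mul' _ _ hK_top

lemma W2sq_map_of_lipschitzWith_of_leftInverse (hf : LipschitzWith K f) (hg : LipschitzWith K⁻¹ g)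
    (hgf : Function.LeftInverse g f) (hK : K ≠ 0) (μ ν : Measure E) :
    W2sq (μ.map f) (ν.map f) = (K : ℝ≥0∞) ^ 2 * W2sq μ ν := by
  refine le_antisymm (W2sq_map_le_of_lipschitzWith hf hK μ ν) ?_
  have map_map_eq (m : Measure E) : (m.map f).map g = m := by
    rw [Measure.map_map hg.continuous.measurable hf.continuous.measurable, hgf.comp_eq_id,
      Measure.map_id]
  calc (K : ℝ≥0∞) ^ 2 * W2sq μ ν
      = (K : ℝ≥0∞) ^ 2 * W2sq ((μ.map f).map g) ((ν.map f).map g) := by simp only [map_map_eq]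
    _ ≤ (K : ℝ≥0∞) ^ 2 * (((K⁻¹ : ℝ≥0) : ℝ≥0∞) ^ 2 * W2sq (μ.map f) (ν.map f)) := by
        gcongr
        exact W2sq_map_le_of_lipschitzWith hg (inv_ne_zero hK) _ _
    _ = W2sq (μ.map f) (ν.map f) := by
        rw [← mul_assoc, ← mul_pow, ← ENNReal.coe_mul, mul_inv_cancel₀ hK]
        simp

end Wasserstein

section Line

variable {E : Type*} [NormedAddCommGroup E] [NormedSpace ℝ E]

lemma lipschitzWith_add_smul (c v : E) : LipschitzWith ‖v‖₊ fun t : ℝ ↦ c + t • v :=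
  .of_dist_le_mul fun s t ↦ by
    rw [dist_add_left, dist_eq_norm, ← sub_smul, norm_smul, mul_comm, coe_nnnorm, Real.dist_eq,
      Real.norm_eq_abs]

lemma exists_lipschitzWith_leftInverse_add_smul (c : E) {v : E} (hv : v ≠ 0) :
    ∃ g : E → ℝ, LipschitzWith ‖v‖₊⁻¹ g ∧ Function.LeftInverse g fun t : ℝ ↦ c + t • v := by
  have hv_norm : ‖v‖ ≠ 0 := norm_ne_zero_iff.2 hv
  obtain ⟨φ, hφ_norm, hφ_v⟩ := exists_dual_vector ℝ v hv_norm
  refine ⟨fun x ↦ ‖v‖⁻¹ * φ (x - c), .of_dist_le_mul fun x y ↦ ?_, fun t ↦ ?_⟩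
  · have hφ_le : ‖φ (x - y)‖ ≤ ‖x - y‖ := by simpa [hφ_norm] using φ.le_opNorm (x - y)
    rw [dist_eq_norm, ← mul_sub, ← map_sub, sub_sub_sub_cancel_right, norm_mul, norm_inv, norm_norm,
      dist_eq_norm]
    exact mul_le_mul_of_nonneg_left hφ_le (by positivity)
  · calc ‖v‖⁻¹ * φ (c + t • v - c) = ‖v‖⁻¹ * (t * ‖v‖) := by simp [hφ_v]
      _ = t := by field_simp

variable [MeasurableSpace E] [BorelSpace E]

lemma W2sq_map_add_smul {m n : Measure ℝ} (hmn : m Set.univ = n Set.univ) (c v : E) :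
    W2sq (m.map fun t ↦ c + t • v) (n.map fun t ↦ c + t • v) = ‖v‖ₑ ^ 2 * W2sq m n := by
  obtain rfl | hv := eq_or_ne v 0
  · simp [Measure.map_const, hmn, W2sq_self]
  · obtain ⟨g, hg, hgf⟩ := exists_lipschitzWith_leftInverse_add_smul c hv
    exact W2sq_map_of_lipschitzWith_of_leftInverse (lipschitzWith_add_smul c v) hg hgf
      (nnnorm_ne_zero_iff.2 hv) m n

lemma exists_map_add_smul_eq {μ : Measure E} {a u : E} (hu : u ≠ 0)
    (hμ : ∀ᵐ x ∂μ, ∃ t : ℝ, x = a + t • u) : ∃ m : Measure ℝ, m.map (fun t ↦ a + t • u) = μ := by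
  obtain ⟨g, hg, hgf⟩ := exists_lipschitzWith_leftInverse_add_smul a hu
  refine ⟨μ.map g, ?_⟩
  have h_comp : (fun t : ℝ ↦ a + t • u) ∘ g =ᵐ[μ] id := by
    filter_upwards [hμ]
    rintro _ ⟨t, rfl⟩
    exact congrArg (fun t : ℝ ↦ a + t • u) (hgf t)
  rw [Measure.map_map (lipschitzWith_add_smul a u).continuous.measurable hg.continuous.measurable,
    Measure.map_congr h_comp, Measure.map_id]

end Line

section Sphere

open scoped Pointwise

lemma linearEquiv_preimage_smul_set {R M N : Type*} [Semiring R] [AddCommMonoid M] [Module R M]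
    [AddCommMonoid N] [Module R N] (L : M ≃ₗ[R] N) (r : Set R) (s : Set N) :
    L ⁻¹' (r • s) = r • L ⁻¹' s := by
  rw [← L.image_symm_eq_preimage, ← L.image_symm_eq_preimage]
  exact Set.image_image2_distrib_right fun c x ↦ map_smul L.symm c x

lemma measurePreserving_map_coe_toSphere {E : Type*} [NormedAddCommGroup E] [NormedSpace ℝ E]
    [MeasurableSpace E] [BorelSpace E] {μ : Measure E} (L : E ≃ₗᵢ[ℝ] E)
    (hL : MeasurePreserving L μ μ) :
    MeasurePreserving L (μ.toSphere.map (↑)) (μ.toSphere.map (↑)) := by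
  refine ⟨hL.measurable, Measure.ext fun s hs ↦ ?_⟩
  have map_coe_apply {t : Set E} (ht : MeasurableSet t) : (μ.toSphere.map (↑)) t =
      Module.finrank ℝ E * μ (Set.Ioo (0 : ℝ) 1 • (sphere 0 1 ∩ t)) := by
    rw [Measure.map_apply measurable_subtype_coe ht,
      μ.toSphere_apply' (measurable_subtype_coe ht), Subtype.image_preimage_coe]
  have h_sphere : L ⁻¹' sphere 0 1 = sphere 0 1 := by simp
  have h_cone : Set.Ioo (0 : ℝ) 1 • (sphere 0 1 ∩ L ⁻¹' s) =
      L ⁻¹' (Set.Ioo (0 : ℝ) 1 • (sphere 0 1 ∩ s)) := by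
    conv_lhs => rw [← h_sphere, ← Set.preimage_inter]
    exact (linearEquiv_preimage_smul_set L.toLinearEquiv _ _).symm
  rw [Measure.map_apply hL.measurable hs, map_coe_apply hs, map_coe_apply (hL.measurable hs),
    h_cone, hL.measure_preimage_emb L.toHomeomorph.measurableEmbedding]

lemma sum_enorm_inner_sq {ι E : Type*} [Fintype ι] [NormedAddCommGroup E] [InnerProductSpace ℝ E]
    (b : OrthonormalBasis ι ℝ E) (x : E) :
    ∑ i, ‖⟪b i, x⟫‖ₑ ^ 2 = ‖x‖ₑ ^ 2 := by
  have h_nnnorm : ∑ i, ‖⟪b i, x⟫‖₊ ^ 2 = ‖x‖₊ ^ 2 :=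
    NNReal.coe_injective (by simpa using b.sum_sq_norm_inner_right x)
  simp only [enorm_eq_nnnorm]
  exact_mod_cast h_nnnorm

variable {E : Type*} [NormedAddCommGroup E] [InnerProductSpace ℝ E] [FiniteDimensional ℝ E]
  [MeasurableSpace E] [BorelSpace E]

lemma lintegral_toSphere_inner_sq_congr {u v : E} (huv : ‖u‖ = ‖v‖) :
    ∫⁻ θ : sphere (0 : E) 1, ‖⟪u, (θ : E)⟫‖ₑ ^ 2 ∂(volume : Measure E).toSphere =
      ∫⁻ θ : sphere (0 : E) 1, ‖⟪v, (θ : E)⟫‖ₑ ^ 2 ∂(volume : Measure E).toSphere := by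
  have lintegral_coe (w : E) :
      ∫⁻ θ : sphere (0 : E) 1, ‖⟪w, (θ : E)⟫‖ₑ ^ 2 ∂(volume : Measure E).toSphere =
        ∫⁻ x, ‖⟪w, x⟫‖ₑ ^ 2 ∂(volume : Measure E).toSphere.map (↑) :=
    (lintegral_map (f := fun x ↦ ‖⟪w, x⟫‖ₑ ^ 2) (by fun_prop) measurable_subtype_coe).symm
  let L : E ≃ₗᵢ[ℝ] E := (ℝ ∙ (u - v))ᗮ.reflection
  have hLu : L u = v := Submodule.reflection_sub huv
  simp only [lintegral_coe]
  rw [← (measurePreserving_map_coe_toSphere L L.measurePreserving).lintegral_comp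
    (f := fun x ↦ ‖⟪v, x⟫‖ₑ ^ 2) (by fun_prop)]
  simp only [← hLu, L.inner_map_map]

lemma finrank_mul_lintegral_toSphere_inner_sq (u : E) :
    Module.finrank ℝ E *
        ∫⁻ θ : sphere (0 : E) 1, ‖⟪u, (θ : E)⟫‖ₑ ^ 2 ∂(volume : Measure E).toSphere =
      ‖u‖ₑ ^ 2 * (volume : Measure E).toSphere Set.univ := by
  set σ := (volume : Measure E).toSphere
  let b := stdOrthonormalBasis ℝ E
  have h_scaled (i) (θ : E) : ‖⟪‖u‖ • b i, θ⟫‖ₑ = ‖u‖ₑ * ‖⟪b i, θ⟫‖ₑ := by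
    rw [real_inner_smul_left, enorm_mul, enorm_norm]
  calc Module.finrank ℝ E * ∫⁻ θ : sphere (0 : E) 1, ‖⟪u, (θ : E)⟫‖ₑ ^ 2 ∂σ
      = ∑ i, ∫⁻ θ : sphere (0 : E) 1, ‖⟪‖u‖ • b i, (θ : E)⟫‖ₑ ^ 2 ∂σ := by
        have h_congr (i) := lintegral_toSphere_inner_sq_congr (u := ‖u‖ • b i) (v := u)
          (by simp [norm_smul])
        simp [σ, h_congr]
    _ = ∫⁻ θ : sphere (0 : E) 1, ‖u‖ₑ ^ 2 * ∑ i, ‖⟪b i, (θ : E)⟫‖ₑ ^ 2 ∂σ := by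
        rw [← lintegral_finsetSum _ fun i _ ↦ by fun_prop]
        simp only [h_scaled, mul_pow, Finset.mul_sum]
    _ = ‖u‖ₑ ^ 2 * σ Set.univ := by
        have h_norm (θ : sphere (0 : E) 1) : ‖(θ : E)‖ₑ = 1 := by
          simp [← ofReal_norm]
        simp [sum_enorm_inner_sq, h_norm]

end Sphere

section SlicedWasserstein

variable {d : ℕ}

lemma lintegral_unifSphere_inner_sq [NeZero d] (u : Ed d) :
    ∫⁻ θ : sphere (0 : Ed d) 1, ‖⟪u, (θ : Ed d)⟫‖ₑ ^ 2 ∂unifSphere d = ‖u‖ₑ ^ 2 / d := by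
  set σ := (volume : Measure (Ed d)).toSphere
  have hσ_zero : σ Set.univ ≠ 0 :=
    Measure.measure_univ_ne_zero.2 (volume : Measure (Ed d)).toSphere_ne_zero
  have hσ_top : σ Set.univ ≠ ∞ := measure_ne_top σ _
  have h_mul := finrank_mul_lintegral_toSphere_inner_sq u
  rw [finrank_euclideanSpace_fin] at h_mul
  rw [ENNReal.eq_div_iff (by simp [NeZero.ne d]) (natCast_ne_top d), unifSphere,
    lintegral_smul_measure, smul_eq_mul, mul_left_comm, h_mul, mul_left_comm,
    ENNReal.inv_mul_cancel hσ_zero hσ_top, mul_one]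

lemma map_proj_map_add_smul (m : Measure ℝ) (a u θ : Ed d) :
    (m.map fun t ↦ a + t • u).map (proj θ) = m.map fun t ↦ ⟪a, θ⟫ + t • ⟪u, θ⟫ := by
  have h_comp : (proj θ ∘ fun t : ℝ ↦ a + t • u) = fun t ↦ ⟪a, θ⟫ + t • ⟪u, θ⟫ := by
    funext t
    simp [proj, inner_add_left, real_inner_smul_left]
  rw [Measure.map_map (by unfold proj; fun_prop) (by fun_prop), h_comp]

lemma SW2sq_map_add_smul [NeZero d] {m n : Measure ℝ} (hmn : m Set.univ = n Set.univ)
    (a u : Ed d) :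
    SW2sq (m.map fun t ↦ a + t • u) (n.map fun t ↦ a + t • u) =
      W2sq (m.map fun t ↦ a + t • u) (n.map fun t ↦ a + t • u) / d :=
  calc SW2sq (m.map fun t ↦ a + t • u) (n.map fun t ↦ a + t • u)
      = ∫⁻ θ : sphere (0 : Ed d) 1, ‖⟪u, (θ : Ed d)⟫‖ₑ ^ 2 * W2sq m n ∂unifSphere d := by
        simp only [SW2sq, map_proj_map_add_smul, W2sq_map_add_smul hmn]
    _ = ‖u‖ₑ ^ 2 / d * W2sq m n := by
        rw [lintegral_mul_const _ (by fun_prop), lintegral_unifSphere_inner_sq]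
    _ = W2sq (m.map fun t ↦ a + t • u) (n.map fun t ↦ a + t • u) / d := by
        rw [W2sq_map_add_smul hmn, ENNReal.mul_div_right_comm]

end SlicedWasserstein

theorem sw2sq_eq_w2sq_div_dim_of_supported_on_line_general (d : ℕ) (μ ν : Measure (Ed d))
    (hμν : μ Set.univ = ν Set.univ) (a u : Ed d) (hu : ‖u‖ = 1)
    (hμline : μ {x : Ed d | ∃ t : ℝ, x = a + t • u}ᶜ = 0)
    (hνline : ν {x : Ed d | ∃ t : ℝ, x = a + t • u}ᶜ = 0) :
    SW2sq μ ν = W2sq μ ν / d := by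
  have hu_ne : u ≠ 0 := norm_ne_zero_iff.1 (hu ▸ one_ne_zero)
  have : NeZero d := ⟨by rintro rfl; exact hu_ne (Subsingleton.elim u 0)⟩
  obtain ⟨m, rfl⟩ := exists_map_add_smul_eq hu_ne hμline
  obtain ⟨n, rfl⟩ := exists_map_add_smul_eq hu_ne hνline
  have h_meas : Measurable fun t : ℝ ↦ a + t • u := by fun_prop
  have hmn : m Set.univ = n Set.univ := by
    simpa [Measure.map_apply h_meas] using hμν
  exact SW2sq_map_add_smul hmn a u

/-- If μ and ν are supported on the same line {a + tu : t ∈ ℝ} with u a unit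
vector, then SW_2²(μ, ν) = W_2²(μ, ν)/d. -/
theorem sw2sq_eq_w2sq_div_dim_of_supported_on_line (d : ℕ) (μ ν : Measure (Ed d))
    [IsProbabilityMeasure μ] [IsProbabilityMeasure ν]
    (hμ2 : FiniteSecondMoment μ) (hν2 : FiniteSecondMoment ν)
    (a u : Ed d) (hu : ‖u‖ = 1)
    (hμline : μ {x : Ed d | ∃ t : ℝ, x = a + t • u}ᶜ = 0)
    (hνline : ν {x : Ed d | ∃ t : ℝ, x = a + t • u}ᶜ = 0) :
    SW2sq μ ν = W2sq μ ν / d := by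
  exact sw2sq_eq_w2sq_div_dim_of_supported_on_line_general d μ ν (by simp) a u hu hμline hνline
end
end

section
/- Let μ, ν ∈ P_2(ℝ^d) with means m_μ = ∫ x dμ(x) and m_ν = ∫ x dν(x), and let μ̄ = (T_{m_μ})_#μ and ν̄ = (T_{m_ν})_#ν be their centered versions, where T_m(x) = x − m. Then SW_2²(μ, ν) = ‖m_μ − m_ν‖²/d + SW_2²(μ̄, ν̄). -/
open MeasureTheory ENNReal Metric Filter
open scoped RealInnerProductSpace NNReal

noncomputable section

/-!
For a coupling `π` of `μ` and `ν`, the difference `x - y` has mean `m_μ - m_ν` under `π`, so its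
second moment is `‖m_μ - m_ν‖²` plus the second moment of `(x - m_μ) - (y - m_ν)`. Translations
identify the couplings of `μ`, `ν` with those of the centered measures, so taking infima gives the
decomposition for `W2sq`. Applied to the projections onto `θ`, it leaves
`∫ ⟪m_μ - m_ν, θ⟫² dλ(θ)`. By rotation invariance, the average of `⟪u, θ⟫²` over `θ` depends only on
`‖u‖`, and summing over an orthonormal basis shows that it is `‖u‖² / d`.
-/

section SecondMoment

variable {Ω E : Type*} [MeasurableSpace Ω] [NormedAddCommGroup E] {P : Measure Ω} {f : Ω → E}

lemma memLp_two_iff_lintegral_enorm_sq_lt_top (hf : AEStronglyMeasurable f P) :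
    MemLp f 2 P ↔ ∫⁻ ω, ‖f ω‖ₑ ^ 2 ∂P < ∞ := by
  have h := eLpNorm_lt_top_iff_lintegral_rpow_enorm_lt_top (f := f) (μ := P)
    two_ne_zero ofNat_ne_top
  simp only [ENNReal.toReal_ofNat, ENNReal.rpow_ofNat] at h
  exact ⟨fun hL2 ↦ h.1 hL2.2, fun hfin ↦ ⟨hf, h.2 hfin⟩⟩

lemma lintegral_enorm_sq_eq_ofReal_integral (hf : MemLp f 2 P) :
    ∫⁻ ω, ‖f ω‖ₑ ^ 2 ∂P = ENNReal.ofReal (∫ ω, ‖f ω‖ ^ 2 ∂P) := by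
  rw [ofReal_integral_eq_lintegral_ofReal hf.norm.integrable_sq
    (ae_of_all _ fun _ ↦ sq_nonneg _)]
  simp only [ENNReal.ofReal_pow (norm_nonneg _), ofReal_norm]

variable [InnerProductSpace ℝ E] [CompleteSpace E] [IsProbabilityMeasure P]

lemma integral_norm_sq_eq_add_integral_norm_sub_integral_sq (hf : MemLp f 2 P) :
    ∫ ω, ‖f ω‖ ^ 2 ∂P = ‖∫ ω, f ω ∂P‖ ^ 2 + ∫ ω, ‖f ω - ∫ ω', f ω' ∂P‖ ^ 2 ∂P := by
  set m := ∫ ω, f ω ∂P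
  have hf_int : Integrable f P := hf.integrable one_le_two
  have hsq : Integrable (fun ω ↦ ‖f ω‖ ^ 2) P := hf.norm.integrable_sq
  have hinner : Integrable (fun ω ↦ 2 * ⟪m, f ω⟫) P := (hf_int.const_inner m).const_mul 2
  have hcross : ∫ ω, ⟪m, f ω⟫ ∂P = ‖m‖ ^ 2 := by
    rw [integral_inner hf_int, real_inner_self_eq_norm_sq]
  have hcentered : ∫ ω, ‖f ω - m‖ ^ 2 ∂P = (∫ ω, ‖f ω‖ ^ 2 ∂P) - 2 * ‖m‖ ^ 2 + ‖m‖ ^ 2 := by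
    simp_rw [norm_sub_sq_real, real_inner_comm m]
    rw [integral_add (by exact hsq.sub hinner) (integrable_const _), integral_sub hsq hinner,
      integral_const_mul, hcross, integral_const, probReal_univ, one_smul]
  rw [hcentered]
  ring

lemma lintegral_enorm_sq_eq_add_lintegral_enorm_sub_integral_sq (hf : Integrable f P) :
    ∫⁻ ω, ‖f ω‖ₑ ^ 2 ∂P =
      ‖∫ ω, f ω ∂P‖ₑ ^ 2 + ∫⁻ ω, ‖f ω - ∫ ω', f ω' ∂P‖ₑ ^ 2 ∂P := by
  set m := ∫ ω, f ω ∂P with hm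
  have hfm : AEStronglyMeasurable (fun ω ↦ f ω - m) P := hf.1.sub aestronglyMeasurable_const
  by_cases hL2 : MemLp f 2 P
  · have hL2m : MemLp (fun ω ↦ f ω - m) 2 P := hL2.sub (memLp_const m)
    rw [lintegral_enorm_sq_eq_ofReal_integral hL2, lintegral_enorm_sq_eq_ofReal_integral hL2m,
      integral_norm_sq_eq_add_integral_norm_sub_integral_sq hL2, ← hm,
      ENNReal.ofReal_add (sq_nonneg _) (integral_nonneg fun _ ↦ sq_nonneg _),
      ENNReal.ofReal_pow (norm_nonneg _), ofReal_norm]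
  · have hL2m : ¬ MemLp (fun ω ↦ f ω - m) 2 P := fun h ↦
      hL2 (by simpa [Pi.add_def] using h.add (memLp_const m))
    rw [memLp_two_iff_lintegral_enorm_sq_lt_top hf.1, not_lt_top_iff] at hL2
    rw [memLp_two_iff_lintegral_enorm_sq_lt_top hfm, not_lt_top_iff] at hL2m
    rw [hL2, hL2m, add_top]

end SecondMoment

section Coupling

variable {E F : Type*} [MeasurableSpace E] [MeasurableSpace F]
  {π : Measure (E × E)} {μ ν : Measure E}

namespace IsCoupling

lemma measurePreserving_fst (hπ : IsCoupling π μ ν) : MeasurePreserving Prod.fst π μ :=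
  ⟨measurable_fst, hπ.1⟩

lemma measurePreserving_snd (hπ : IsCoupling π μ ν) : MeasurePreserving Prod.snd π ν :=
  ⟨measurable_snd, hπ.2⟩

lemma isProbabilityMeasure [hμ : IsProbabilityMeasure μ] (hπ : IsCoupling π μ ν) :
    IsProbabilityMeasure π := by
  rw [← hπ.1] at hμ
  exact Measure.isProbabilityMeasure_of_map Prod.fst

end IsCoupling

lemma isCoupling_map_prodCongr_iff (e f : E ≃ᵐ F) :
    IsCoupling (π.map (e.prodCongr f)) (μ.map e) (ν.map f) ↔ IsCoupling π μ ν := by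
  have hfst : (π.map (e.prodCongr f)).map Prod.fst = (π.map Prod.fst).map e := by
    rw [Measure.map_map measurable_fst (e.prodCongr f).measurable,
      Measure.map_map e.measurable measurable_fst]
    rfl
  have hsnd : (π.map (e.prodCongr f)).map Prod.snd = (π.map Prod.snd).map f := by
    rw [Measure.map_map measurable_snd (e.prodCongr f).measurable,
      Measure.map_map f.measurable measurable_snd]
    rfl
  simp only [IsCoupling, hfst, hsnd, e.map_measurableEquiv_injective.eq_iff,
    f.map_measurableEquiv_injective.eq_iff]

lemma W2sq_map_measurableEquiv [NormedAddCommGroup F] (e f : E ≃ᵐ F) :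
    W2sq (μ.map e) (ν.map f) =
      ⨅ (π : Measure (E × E)) (_ : IsCoupling π μ ν), ∫⁻ p, ‖e p.1 - f p.2‖ₑ ^ 2 ∂π := by
  have hsurj : Function.Surjective (Measure.map (e.prodCongr f)) := fun π ↦
    ⟨π.map (e.prodCongr f).symm, (e.prodCongr f).map_map_symm⟩
  refine (hsurj.iInf_congr _ fun π ↦ ?_).symm
  refine iInf_congr_Prop (isCoupling_map_prodCongr_iff e f) fun _ ↦ ?_
  exact lintegral_map_equiv _ _

end Coupling

section Centered

/-- The centered version `(T_m)_# μ` of `μ`, where `T_m x = x - m` and `m` is the mean of `μ`.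
The mean is a Bochner integral, so `centered μ = μ` if `μ` has no first moment. -/
def centered {E : Type*} [NormedAddCommGroup E] [NormedSpace ℝ E] [MeasurableSpace E]
    (μ : Measure E) : Measure E :=
  μ.map fun x ↦ x - ∫ y, y ∂μ

section Linear

variable {E F : Type*} [NormedAddCommGroup E] [NormedSpace ℝ E] [MeasurableSpace E] [BorelSpace E]
  [NormedAddCommGroup F] [NormedSpace ℝ F] [MeasurableSpace F] [BorelSpace F]
  [SecondCountableTopology F] {μ : Measure E}

lemma integrable_id_map_continuousLinearMap (hμ : Integrable id μ) (L : E →L[ℝ] F) :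
    Integrable id (μ.map L) :=
  (integrable_map_measure aestronglyMeasurable_id (by fun_prop)).2 (L.integrable_comp hμ)

lemma map_centered [CompleteSpace E] [CompleteSpace F] (hμ : Integrable id μ) (L : E →L[ℝ] F) :
    (centered μ).map L = centered (μ.map L) := by
  rw [centered, centered, L.integral_id_map hμ, Measure.map_map (by fun_prop) (by fun_prop),
    Measure.map_map (by fun_prop) (by fun_prop)]
  congr 1
  ext x
  exact map_sub L _ _

end Linear

variable {E : Type*} [NormedAddCommGroup E] [InnerProductSpace ℝ E] [CompleteSpace E]
  [MeasurableSpace E] [BorelSpace E] [SecondCountableTopology E] {μ ν : Measure E}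
  [IsProbabilityMeasure μ]

lemma IsCoupling.lintegral_enorm_sub_sq {π : Measure (E × E)} (hπ : IsCoupling π μ ν)
    (hμ : Integrable id μ) (hν : Integrable id ν) :
    ∫⁻ p, ‖p.1 - p.2‖ₑ ^ 2 ∂π = ‖(∫ x, x ∂μ) - ∫ x, x ∂ν‖ₑ ^ 2 +
      ∫⁻ p, ‖(p.1 - ∫ x, x ∂μ) - (p.2 - ∫ x, x ∂ν)‖ₑ ^ 2 ∂π := by
  have := hπ.isProbabilityMeasure
  have hfst : Integrable (fun p : E × E ↦ p.1) π :=
    hπ.measurePreserving_fst.integrable_comp_of_integrable hμ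
  have hsnd : Integrable (fun p : E × E ↦ p.2) π :=
    hπ.measurePreserving_snd.integrable_comp_of_integrable hν
  have hmean : ∫ p, p.1 - p.2 ∂π = (∫ x, x ∂μ) - ∫ x, x ∂ν := by
    rw [integral_sub hfst hsnd, ← hπ.1, ← hπ.2,
      integral_map (f := fun x ↦ x) measurable_fst.aemeasurable aestronglyMeasurable_id,
      integral_map (f := fun x ↦ x) measurable_snd.aemeasurable aestronglyMeasurable_id]
  rw [lintegral_enorm_sq_eq_add_lintegral_enorm_sub_integral_sq (by exact hfst.sub hsnd), hmean]
  simp only [sub_sub_sub_comm]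

theorem W2sq_eq_enorm_sub_sq_add_W2sq_centered (hμ : Integrable id μ) (hν : Integrable id ν) :
    W2sq μ ν =
      ‖(∫ x, x ∂μ) - ∫ x, x ∂ν‖ₑ ^ 2 + W2sq (centered μ) (centered ν) := by
  have hcentered : W2sq (centered μ) (centered ν) =
      ⨅ (π : Measure (E × E)) (_ : IsCoupling π μ ν),
        ∫⁻ p, ‖(p.1 - ∫ x, x ∂μ) - (p.2 - ∫ x, x ∂ν)‖ₑ ^ 2 ∂π :=
    W2sq_map_measurableEquiv (MeasurableEquiv.subRight _) (MeasurableEquiv.subRight _)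
  simp only [hcentered, ENNReal.add_iInf]
  exact iInf_congr fun π ↦ iInf_congr fun hπ ↦ hπ.lintegral_enorm_sub_sq hμ hν

end Centered

section Sphere

open scoped Pointwise

/-- The action of a linear isometry on the sphere of radius `r` centered at the origin. -/
def sphereHomeomorph {E : Type*} [NormedAddCommGroup E] [NormedSpace ℝ E] (L : E ≃ₗᵢ[ℝ] E)
    (r : ℝ) : sphere (0 : E) r ≃ₜ sphere (0 : E) r :=
  L.toHomeomorph.subtype fun x ↦ by simp

lemma measurePreserving_sphereHomeomorph_toSphere {E : Type*} [NormedAddCommGroup E]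
    [NormedSpace ℝ E] [MeasurableSpace E] [BorelSpace E] {μ : Measure E} {L : E ≃ₗᵢ[ℝ] E}
    (hL : MeasurePreserving L μ μ) :
    MeasurePreserving (sphereHomeomorph L 1) μ.toSphere μ.toSphere := by
  have hmeas : Measurable (sphereHomeomorph L 1) := (sphereHomeomorph L 1).continuous.measurable
  refine ⟨hmeas, Measure.ext fun s hs ↦ ?_⟩
  have himage : L '' (Subtype.val '' (sphereHomeomorph L 1 ⁻¹' s)) = Subtype.val '' s := by
    have hcoe (θ : sphere (0 : E) 1) : L θ = sphereHomeomorph L 1 θ := rfl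
    rw [Set.image_comm hcoe,
      Set.image_preimage_eq s (sphereHomeomorph L 1).surjective]
  have hcone : L '' (Set.Ioo (0 : ℝ) 1 • (Subtype.val '' (sphereHomeomorph L 1 ⁻¹' s))) =
      Set.Ioo (0 : ℝ) 1 • (Subtype.val '' s) := by
    rw [← himage]
    exact Set.image_image2_distrib_right L.map_smul
  rw [Measure.map_apply hmeas hs, Measure.toSphere_apply' _ (hmeas hs),
    Measure.toSphere_apply' _ hs, ← hcone,
    ← hL.measure_preimage_emb L.toHomeomorph.measurableEmbedding (L '' _),
    Set.preimage_image_eq _ L.injective]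

section Invariant

variable {E : Type*} [NormedAddCommGroup E] [InnerProductSpace ℝ E] [MeasurableSpace E]
  [BorelSpace E] {σ : Measure (sphere (0 : E) 1)}

lemma lintegral_enorm_inner_sq_eq_of_norm_eq
    (hσ : ∀ L : E ≃ₗᵢ[ℝ] E, MeasurePreserving (sphereHomeomorph L 1) σ σ) {u v : E}
    (huv : ‖u‖ = ‖v‖) :
    ∫⁻ θ, ‖⟪u, (θ : E)⟫‖ₑ ^ 2 ∂σ = ∫⁻ θ, ‖⟪v, (θ : E)⟫‖ₑ ^ 2 ∂σ := by
  let L : E ≃ₗᵢ[ℝ] E := (ℝ ∙ (u - v))ᗮ.reflection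
  have hLu : L u = v := Submodule.reflection_sub huv
  have hinner (θ : sphere (0 : E) 1) : ⟪v, (sphereHomeomorph L 1 θ : E)⟫ = ⟪u, (θ : E)⟫ := by
    rw [← hLu]
    exact L.inner_map_map u θ
  calc ∫⁻ θ, ‖⟪u, (θ : E)⟫‖ₑ ^ 2 ∂σ
      = ∫⁻ θ, ‖⟪v, (sphereHomeomorph L 1 θ : E)⟫‖ₑ ^ 2 ∂σ := by simp only [hinner]
    _ = ∫⁻ θ, ‖⟪v, (θ : E)⟫‖ₑ ^ 2 ∂σ :=
        (hσ L).lintegral_comp_emb (sphereHomeomorph L 1).measurableEmbedding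
          fun θ ↦ ‖⟪v, (θ : E)⟫‖ₑ ^ 2

variable [FiniteDimensional ℝ E]

lemma finrank_mul_lintegral_enorm_inner_sq
    (hσ : ∀ L : E ≃ₗᵢ[ℝ] E, MeasurePreserving (sphereHomeomorph L 1) σ σ) (u : E) :
    Module.finrank ℝ E * ∫⁻ θ, ‖⟪u, (θ : E)⟫‖ₑ ^ 2 ∂σ = ‖u‖ₑ ^ 2 * σ Set.univ := by
  let b := stdOrthonormalBasis ℝ E
  have hparseval (θ : sphere (0 : E) 1) :
      ∑ i, ‖⟪‖u‖ • b i, (θ : E)⟫‖ₑ ^ 2 = ‖u‖ₑ ^ 2 := by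
    simp only [real_inner_smul_left, enorm_mul, mul_pow, enorm_norm, ← Finset.mul_sum]
    simp only [← ofReal_norm, ← ENNReal.ofReal_pow (norm_nonneg _)]
    rw [← ENNReal.ofReal_sum_of_nonneg fun i _ ↦ sq_nonneg _, b.sum_sq_norm_inner_right]
    simp
  calc Module.finrank ℝ E * ∫⁻ θ, ‖⟪u, (θ : E)⟫‖ₑ ^ 2 ∂σ
      = ∑ i, ∫⁻ θ, ‖⟪‖u‖ • b i, (θ : E)⟫‖ₑ ^ 2 ∂σ := by
        have hnorm (i) : ‖‖u‖ • b i‖ = ‖u‖ := by simp [norm_smul]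
        simp [lintegral_enorm_inner_sq_eq_of_norm_eq hσ (hnorm _)]
    _ = ∫⁻ θ, ∑ i, ‖⟪‖u‖ • b i, (θ : E)⟫‖ₑ ^ 2 ∂σ :=
        (lintegral_finsetSum _ fun i _ ↦ by fun_prop).symm
    _ = ‖u‖ₑ ^ 2 * σ Set.univ := by simp only [hparseval, lintegral_const]

end Invariant

variable {d : ℕ}

lemma measurePreserving_sphereHomeomorph_unifSphere (L : Ed d ≃ₗᵢ[ℝ] Ed d) :
    MeasurePreserving (sphereHomeomorph L 1) (unifSphere d) (unifSphere d) :=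
  (measurePreserving_sphereHomeomorph_toSphere L.measurePreserving).smul_measure _

lemma isProbabilityMeasure_unifSphere [NeZero d] : IsProbabilityMeasure (unifSphere d) :=
  have : NeZero (volume : Measure (Ed d)).toSphere := ⟨Measure.toSphere_ne_zero _⟩
  isProbabilityMeasureSMul

lemma lintegral_enorm_inner_sq_unifSphere (u : Ed d) :
    ∫⁻ θ, ‖⟪u, (θ : Ed d)⟫‖ₑ ^ 2 ∂unifSphere d = ‖u‖ₑ ^ 2 / d := by
  rcases eq_zero_or_neZero d with rfl | _
  · simp [Subsingleton.elim u 0]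
  · have := isProbabilityMeasure_unifSphere (d := d)
    have h := finrank_mul_lintegral_enorm_inner_sq measurePreserving_sphereHomeomorph_unifSphere u
    rw [finrank_euclideanSpace_fin, measure_univ, mul_one] at h
    exact (ENNReal.eq_div_iff (NeZero.ne _) (natCast_ne_top d)).2 h

end Sphere

section SlicedWasserstein

variable {d : ℕ} {μ ν : Measure (Ed d)}

lemma proj_eq_innerSL (θ : Ed d) : proj θ = innerSL ℝ θ :=
  funext fun x ↦ real_inner_comm θ x

lemma W2sq_map_proj_eq_enorm_inner_sq_add [IsProbabilityMeasure μ]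
    (hμ : Integrable id μ) (hν : Integrable id ν) (θ : Ed d) :
    W2sq (μ.map (proj θ)) (ν.map (proj θ)) = ‖⟪(∫ x, x ∂μ) - ∫ x, x ∂ν, θ⟫‖ₑ ^ 2 +
      W2sq ((centered μ).map (proj θ)) ((centered ν).map (proj θ)) := by
  rw [proj_eq_innerSL, map_centered hμ, map_centered hν]
  have := Measure.isProbabilityMeasure_map (μ := μ) (innerSL ℝ θ).measurable.aemeasurable
  rw [W2sq_eq_enorm_sub_sq_add_W2sq_centered (integrable_id_map_continuousLinearMap hμ _)
      (integrable_id_map_continuousLinearMap hν _), (innerSL ℝ θ).integral_id_map hμ,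
    (innerSL ℝ θ).integral_id_map hν, ← map_sub, innerSL_apply_apply, real_inner_comm]

theorem sw2sq_mean_decomposition_general [IsProbabilityMeasure μ]
    (hμ : Integrable id μ) (hν : Integrable id ν) :
    SW2sq μ ν = ENNReal.ofReal (‖(∫ x, x ∂μ) - ∫ x, x ∂ν‖ ^ 2) / d +
      SW2sq (μ.map fun x => x - ∫ x, x ∂μ) (ν.map fun x => x - ∫ x, x ∂ν) := by
  simp only [SW2sq, W2sq_map_proj_eq_enorm_inner_sq_add hμ hν]
  rw [lintegral_add_left (by fun_prop), lintegral_enorm_inner_sq_unifSphere,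
    ENNReal.ofReal_pow (norm_nonneg _), ofReal_norm]
  rfl

lemma FiniteSecondMoment.integrable_id [IsFiniteMeasure μ] (hμ : FiniteSecondMoment μ) :
    Integrable id μ :=
  ((memLp_two_iff_lintegral_enorm_sq_lt_top aestronglyMeasurable_id).2 hμ).integrable one_le_two

end SlicedWasserstein

/-- The squared Sliced-Wasserstein distance decomposes as the squared distance
between the means divided by d plus the squared Sliced-Wasserstein distance between the
centered measures. -/
theorem sw2sq_mean_decomposition (d : ℕ) (μ ν : Measure (Ed d))
    [IsProbabilityMeasure μ] [IsProbabilityMeasure ν]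
    (hμ2 : FiniteSecondMoment μ) (hν2 : FiniteSecondMoment ν) :
    SW2sq μ ν = ENNReal.ofReal (‖(∫ x, x ∂μ) - ∫ x, x ∂ν‖ ^ 2) / d +
      SW2sq (μ.map fun x => x - ∫ x, x ∂μ) (ν.map fun x => x - ∫ x, x ∂ν) :=
  sw2sq_mean_decomposition_general hμ2.integrable_id hν2.integrable_id
end
end
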